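/- Assume the commutative ring R is torsion-free as a ℤ-module, and let F be a formal group law over R with associated power series q(x,y). Then the following are equivalent: (i) q(x,y) = q(y,x) (q is symmetric); (ii) the one-variable power series q(x,x) is even, i.e., only even powers of x occur; (iii) every power series L ∈ (ℚ ⊗_ℤ R)⟦x⟧ with L(x) ≡ x mod x² and L(F(x,y)) = L(x) + L(y) (the logarithm of F over ℚ ⊗_ℤ R) is an odd power series, i.e., L(−x) = −L(x). -/

import Mathlib

noncomputable section
open MvPowerSeries

variable {k : Type*} [CommRing k]

/-- Substitution of a family of power series (each with zero constant term) into a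
multivariate power series, via the standard coefficient formula. -/
def psSubst {σ τ : Type*} [Fintype σ] [DecidableEq σ]
    (a : σ → MvPowerSeries τ k) (f : MvPowerSeries σ k) : MvPowerSeries τ k :=
  fun e => ∑ d ∈ Finset.Iic (Finsupp.equivFunOnFinite.symm fun _ : σ => e.sum fun _ m => m),
    (MvPowerSeries.coeff d f) * MvPowerSeries.coeff e (∏ i, a i ^ d i)

/-- The automorphism of `k⟦x,y⟧` exchanging the two variables. -/
def swapPS (f : MvPowerSeries (Fin 2) k) : MvPowerSeries (Fin 2) k :=
  fun d => MvPowerSeries.coeff (Finsupp.equivMapDomain (Equiv.swap 0 1) d) f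

/-- A formal group law over `k`. -/
def IsFormalGroupLaw (F : MvPowerSeries (Fin 2) k) : Prop :=
  swapPS F = F ∧
  psSubst ![X 0, 0] F = (X 0 : MvPowerSeries (Fin 2) k) ∧
  psSubst ![0, X 1] F = (X 1 : MvPowerSeries (Fin 2) k) ∧
  psSubst ![psSubst ![(X 0 : MvPowerSeries (Fin 3) k), X 1] F, X 2] F =
    psSubst ![(X 0 : MvPowerSeries (Fin 3) k), psSubst ![(X 1 : MvPowerSeries (Fin 3) k), X 2] F] F

/-- The formal difference `x [-1] y = F(x, ι(y)) ∈ k⟦x,y⟧`, where `ι` is the formal inverse. -/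
def formalDiff (F : MvPowerSeries (Fin 2) k) (ι : PowerSeries k) : MvPowerSeries (Fin 2) k :=
  psSubst ![X 0, psSubst (fun _ : Unit => (X 1 : MvPowerSeries (Fin 2) k)) ι] F

/-!
The power series `q` is symmetric exactly when `[-1]x = -x`: setting one variable to zero gives
`[-1]x = -x q(0, x)` and `x = x q(x, 0)`, and conversely `[-1](x [-1] y) = y [-1] x` turns
`[-1]x = -x` into antisymmetry of the formal difference. Since a logarithm `L` is injective under
composition and `L([-1]x) = -L(x)`, this in turn means that `L` is odd. Finally, differentiating
`F(x, [-1]y) = (x - y) q(x, y)` in `x` and restricting to the diagonal identifies `q(x, x)` with the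
invariant differential `∂F/∂x (x, [-1]x)`, which is `L'`; so `L` is odd exactly when `q(x, x)` is
even. Over a `ℚ`-algebra the antiderivative of `q(x, x)` is a logarithm, and a torsion-free ring
embeds into its rationalisation, where both conditions on `q` may be tested.
-/

section Substitution

variable {σ τ : Type*}

lemma hasSubst_pair {a b : MvPowerSeries τ k} (ha : PowerSeries.HasSubst a)
    (hb : PowerSeries.HasSubst b) : HasSubst ![a, b] :=
  hasSubst_of_constantCoeff_nilpotent (Fin.forall_fin_two.2 ⟨ha, hb⟩)

lemma subst_pair_subst {a : σ → MvPowerSeries τ k} (ha : HasSubst a) {f g : MvPowerSeries σ k}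
    (hf : PowerSeries.HasSubst f) (hg : PowerSeries.HasSubst g) (F : MvPowerSeries (Fin 2) k) :
    subst a (subst ![f, g] F) = subst ![subst a f, subst a g] F := by
  rw [subst_comp_subst_apply (hasSubst_pair hf hg) ha]
  congr! 1
  exact funext (Fin.forall_fin_two.2 ⟨rfl, rfl⟩)

lemma subst_X_zero_X_one (f : MvPowerSeries (Fin 2) k) : f.subst ![X 0, X 1] = f := by
  have hX : ![(X 0 : MvPowerSeries (Fin 2) k), X 1] = X :=
    funext (Fin.forall_fin_two.2 ⟨rfl, rfl⟩)
  rw [hX, subst_self, id_eq]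

lemma subst_powerSeries_subst {a : σ → MvPowerSeries τ k} (ha : HasSubst a)
    {g : MvPowerSeries σ k} (hg : PowerSeries.HasSubst g) (f : PowerSeries k) :
    subst a (f.subst g) = f.subst (subst a g) :=
  subst_comp_subst_apply hg.const ha f

lemma neg_subst {a : MvPowerSeries τ k} (ha : PowerSeries.HasSubst a) (f : PowerSeries k) :
    (-f).subst a = -f.subst a := by
  rw [← PowerSeries.coe_substAlgHom ha, map_neg]

lemma map_subst_pair {S : Type*} [CommRing S] (φ : k →+* S) {a b : MvPowerSeries τ k}
    (ha : PowerSeries.HasSubst a) (hb : PowerSeries.HasSubst b) (F : MvPowerSeries (Fin 2) k) :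
    (F.subst ![a, b]).map φ = (F.map φ).subst ![a.map φ, b.map φ] := by
  rw [map_subst (hasSubst_pair ha hb)]
  congr! 1
  exact funext (Fin.forall_fin_two.2 ⟨rfl, rfl⟩)

lemma constantCoeff_subst_of_constantCoeff_eq_zero [Finite σ] {a : σ → MvPowerSeries τ k}
    (ha : ∀ i, constantCoeff (a i) = 0) (f : MvPowerSeries σ k) :
    constantCoeff (f.subst a) = constantCoeff f := by
  have hs : HasSubst a := hasSubst_of_constantCoeff_zero ha
  have h := constantCoeff_subst_eq_zero hs ha (f := f - C (constantCoeff f)) (by simp)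
  rwa [subst_sub hs, subst_C, map_sub, constantCoeff_C, sub_eq_zero] at h

lemma psSubst_eq_subst [Fintype σ] [DecidableEq σ] {a : σ → MvPowerSeries τ k}
    (ha : ∀ i, constantCoeff (a i) = 0) (f : MvPowerSeries σ k) :
    psSubst a f = f.subst a := by
  ext e
  rw [coeff_subst (hasSubst_of_constantCoeff_zero ha), finsum_eq_sum_of_support_subset
    (s := Finset.Iic (Finsupp.equivFunOnFinite.symm fun _ : σ => e.degree))]
  · refine Finset.sum_congr rfl fun d _ => ?_
    rw [smul_eq_mul, Finsupp.prod_fintype _ _ (by simp)]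
  · refine Function.support_subset_iff'.2 fun d hd => ?_
    obtain ⟨i, hi⟩ : ∃ i, e.degree < d i := by
      simpa [Finsupp.le_def] using hd
    have hdvd : a i ^ d i ∣ d.prod fun s m => a s ^ m := by
      rw [Finsupp.prod_fintype _ _ (by simp)]
      exact Finset.dvd_prod_of_mem _ (Finset.mem_univ i)
    obtain ⟨g, hg⟩ := hdvd
    have horder : (e.degree : ℕ∞) < (a i ^ d i * g).order :=
      calc (e.degree : ℕ∞) < d i := by exact_mod_cast hi
        _ ≤ (a i ^ d i).order := le_order_pow_of_constantCoeff_eq_zero _ (ha i)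
        _ ≤ (a i ^ d i).order + g.order := le_self_add
        _ ≤ (a i ^ d i * g).order := le_order_mul
    rw [hg, coeff_of_lt_order horder, smul_zero]

lemma swapPS_eq_subst (f : MvPowerSeries (Fin 2) k) : swapPS f = f.subst ![X 1, X 0] := by
  have hrename : swapPS f = rename (Equiv.swap 0 1) f := by
    ext d
    have h := coeff_embDomain_rename (Equiv.swap (0 : Fin 2) 1).toEmbedding f
      (Finsupp.equivMapDomain (Equiv.swap 0 1) d)
    have hd : Finsupp.embDomain (Equiv.swap (0 : Fin 2) 1).toEmbedding
        (Finsupp.equivMapDomain (Equiv.swap 0 1) d) = d := by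
      rw [Finsupp.embDomain_eq_mapDomain, Equiv.coe_toEmbedding,
        ← Finsupp.equivMapDomain_eq_mapDomain, ← Finsupp.equivMapDomain_trans]
      simp
    rw [hd] at h
    exact h.symm
  rw [hrename, rename_eq_subst]
  congr! 1
  exact funext (Fin.forall_fin_two.2 ⟨by simp, by simp⟩)

end Substitution

lemma X_sub_X_mul_eq_zero_iff {σ : Type*} {i j : σ} (hij : i ≠ j) {g : MvPowerSeries σ k} :
    (X i - X j) * g = 0 ↔ g = 0 := by
  classical
  refine ⟨fun h => ?_, fun h => by rw [h, mul_zero]⟩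
  rw [sub_mul, sub_eq_zero] at h
  suffices hcoeff : ∀ n (d : σ →₀ ℕ), d j = n → coeff d g = 0 from
    ext fun d => hcoeff _ d rfl
  have hshift (d : σ →₀ ℕ) : coeff d g = coeff (Finsupp.single i 1 + d) (X j * g) := by
    rw [← h, X, coeff_add_monomial_mul, one_mul]
  intro n
  induction n with
  | zero =>
    intro d hd
    rw [hshift, X, coeff_monomial_mul, if_neg]
    simp [hij, hd]
  | succ n ih =>
    intro d hd
    rw [hshift, X, coeff_monomial_mul, if_pos (by simp [hij, hd]), one_mul]
    exact ih _ (by simp [hij, hd])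

section Derivative

variable {σ τ : Type*}

open scoped MvPowerSeries.WithPiTopology in
lemma continuous_pderiv [TopologicalSpace k] [IsTopologicalRing k] (i : σ) :
    Continuous (pderiv k i) := by
  refine continuous_pi fun d => ?_
  change Continuous fun f => coeff d (pderiv k i f)
  simp_rw [coeff_pderiv]
  exact (WithPiTopology.continuous_coeff k _).mul_const _

lemma pderiv_aeval [Fintype σ] (a : σ → MvPowerSeries τ k) (t : τ) (p : MvPolynomial σ k) :
    pderiv k t (MvPolynomial.aeval a p) =
      ∑ s, MvPolynomial.aeval a (MvPolynomial.pderiv s p) * pderiv k t (a s) := by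
  classical
  induction p using MvPolynomial.induction_on with
  | C r => simp [MvPowerSeries.algebraMap_apply]
  | add p q hp hq => simp only [map_add, hp, hq, add_mul, Finset.sum_add_distrib]
  | mul_X p i hp =>
    simp only [map_mul, MvPolynomial.aeval_X, Derivation.leibniz, smul_eq_mul, hp, map_add,
      add_mul, Finset.sum_add_distrib, MvPolynomial.pderiv_X, Finset.mul_sum]
    congr 1
    · rw [Finset.sum_eq_single i] <;> simp +contextual [eq_comm]
    · exact Finset.sum_congr rfl fun _ _ => by ring

open scoped MvPowerSeries.WithPiTopology in
lemma pderiv_subst [Fintype σ] {a : σ → MvPowerSeries τ k} (ha : HasSubst a) (t : τ)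
    (f : MvPowerSeries σ k) :
    pderiv k t (f.subst a) = ∑ s, (pderiv k s f).subst a * pderiv k t (a s) := by
  -- Both sides are continuous in `f` for the discrete topology on `k`, and polynomials are dense.
  let _ : UniformSpace k := ⊥
  have _ : DiscreteUniformity k := ⟨rfl⟩
  have hsubst := continuous_subst (R := k) ha
  refine congrFun ((WithPiTopology.denseRange_toMvPowerSeries (σ := σ) (R := k)).equalizer
    ((continuous_pderiv t).comp hsubst)
    (continuous_finsetSum _ fun s _ => (hsubst.comp (continuous_pderiv s)).mul_const _)
    (funext fun p => ?_)) f
  simpa [pderiv_coe, subst_coe] using pderiv_aeval a t p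

lemma pderiv_subst_pair {a b : MvPowerSeries τ k} (ha : PowerSeries.HasSubst a)
    (hb : PowerSeries.HasSubst b) (t : τ) (F : MvPowerSeries (Fin 2) k) :
    pderiv k t (F.subst ![a, b]) =
      (pderiv k 0 F).subst ![a, b] * pderiv k t a +
        (pderiv k 1 F).subst ![a, b] * pderiv k t b := by
  simp [pderiv_subst (hasSubst_pair ha hb)]

lemma pderiv_powerSeries_subst {a : MvPowerSeries τ k} (ha : PowerSeries.HasSubst a) (t : τ)
    (f : PowerSeries k) :
    pderiv k t (f.subst a) = (PowerSeries.derivative k f).subst a * pderiv k t a :=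
  (pderiv_subst ha.const t f).trans (Fintype.sum_unique _)

lemma exists_derivative_eq [Algebra ℚ k] (g : PowerSeries k) :
    ∃ L : PowerSeries k, L.constantCoeff = 0 ∧ PowerSeries.derivative k L = g := by
  refine ⟨.mk fun n => (n : ℚ)⁻¹ • g.coeff (n - 1), by simp, ?_⟩
  ext n
  rw [PowerSeries.coeff_derivative, PowerSeries.coeff_mk, add_tsub_cancel_right, smul_mul_assoc,
    mul_comm, ← Nat.cast_succ, ← nsmul_eq_mul, ← Nat.cast_smul_eq_nsmul ℚ, smul_smul,
    inv_mul_cancel₀ (by positivity), one_smul]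

end Derivative

section FormalGroupLaw

variable {σ : Type*}

lemma constantCoeff_pderiv (i : σ) (f : MvPowerSeries σ k) :
    constantCoeff (pderiv k i f) = coeff (Finsupp.single i 1) f := by
  simp [← coeff_zero_eq_constantCoeff_apply, coeff_pderiv]

namespace IsFormalGroupLaw

variable {F : MvPowerSeries (Fin 2) k}

lemma subst_X_zero (hF : IsFormalGroupLaw F) :
    F.subst ![X 0, 0] = (X 0 : MvPowerSeries (Fin 2) k) :=
  (psSubst_eq_subst (Fin.forall_fin_two.2 (by simp)) F).symm.trans hF.2.1

lemma subst_zero_X (hF : IsFormalGroupLaw F) :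
    F.subst ![0, X 1] = (X 1 : MvPowerSeries (Fin 2) k) :=
  (psSubst_eq_subst (Fin.forall_fin_two.2 (by simp)) F).symm.trans hF.2.2.1

lemma constantCoeff_eq_zero (hF : IsFormalGroupLaw F) : constantCoeff F = 0 := by
  have h := congrArg constantCoeff hF.subst_X_zero
  rwa [constantCoeff_subst_of_constantCoeff_eq_zero (Fin.forall_fin_two.2 (by simp)),
    constantCoeff_X] at h

lemma coeff_single_zero_one (hF : IsFormalGroupLaw F) : coeff (Finsupp.single 0 1) F = 1 := by
  have h := congrArg (constantCoeff ∘ pderiv k 0) hF.subst_X_zero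
  rwa [Function.comp_apply, pderiv_subst_pair (.X 0) .zero, map_zero, mul_zero, add_zero,
    Function.comp_apply, pderiv_X_self, mul_one,
    constantCoeff_subst_of_constantCoeff_eq_zero (Fin.forall_fin_two.2 (by simp)),
    constantCoeff_pderiv, constantCoeff_one] at h

lemma coeff_single_one_one (hF : IsFormalGroupLaw F) : coeff (Finsupp.single 1 1) F = 1 := by
  have h := congrArg (constantCoeff ∘ pderiv k 1) hF.subst_zero_X
  rwa [Function.comp_apply, pderiv_subst_pair .zero (.X 1), map_zero, mul_zero, zero_add,
    Function.comp_apply, pderiv_X_self, mul_one,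
    constantCoeff_subst_of_constantCoeff_eq_zero (Fin.forall_fin_two.2 (by simp)),
    constantCoeff_pderiv, constantCoeff_one] at h

lemma subst_assoc (hF : IsFormalGroupLaw F) :
    F.subst ![F.subst ![(X 0 : MvPowerSeries (Fin 3) k), X 1], X 2] =
      F.subst ![X 0, F.subst ![X 1, X 2]] := by
  have hX (i j : Fin 3) : psSubst ![X i, X j] F = F.subst ![X i, X j] :=
    psSubst_eq_subst (Fin.forall_fin_two.2 (by simp)) F
  have hFX (i j : Fin 3) : constantCoeff (F.subst ![(X i : MvPowerSeries (Fin 3) k), X j]) = 0 :=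
    constantCoeff_subst_eq_zero .X_X (Fin.forall_fin_two.2 (by simp)) hF.constantCoeff_eq_zero
  have h := hF.2.2.2
  rwa [hX, hX, psSubst_eq_subst (Fin.forall_fin_two.2 (by simp [hFX])),
    psSubst_eq_subst (Fin.forall_fin_two.2 (by simp [hFX]))] at h

/-- A power series satisfying the formal group law axioms, bundled as Mathlib's `FormalGroup`,
whose axioms prescribe the linear terms of `F` instead of `F(x, 0) = x = F(0, x)`. -/
def toFormalGroup (hF : IsFormalGroupLaw F) : FormalGroup k where
  toPowerSeries := F
  zero_constantCoeff := hF.constantCoeff_eq_zero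
  lin_coeff_X := hF.coeff_single_zero_one
  lin_coeff_Y := hF.coeff_single_one_one
  assoc := hF.subst_assoc

instance isComm_toFormalGroup (hF : IsFormalGroupLaw F) : hF.toFormalGroup.IsComm where
  comm := hF.1.symm.trans (swapPS_eq_subst F)

end IsFormalGroupLaw

instance isComm_map {S : Type*} [CommRing S] (F : FormalGroup k) [F.IsComm] (φ : k →+* S) :
    (F.map φ).IsComm where
  comm := by
    have h := congrArg (MvPowerSeries.map φ) (FormalGroup.IsComm.comm (F := F))
    rwa [map_subst_pair φ (.X 1) (.X 0), map_X, map_X] at h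

lemma hasSubst_subst_pair (F : FormalGroup k) {a b : MvPowerSeries σ k}
    (ha : PowerSeries.HasSubst a) (hb : PowerSeries.HasSubst b) :
    PowerSeries.HasSubst (F.toPowerSeries.subst ![a, b]) :=
  IsNilpotent_subst (hasSubst_pair ha hb) (F.zero_constantCoeff ▸ .zero)

lemma pderiv_one_eq_pderiv_zero_subst (F : FormalGroup k) [F.IsComm] :
    pderiv k 1 F.toPowerSeries = (pderiv k 0 F.toPowerSeries).subst ![X 1, X 0] := by
  have h := congrArg (pderiv k 1) (FormalGroup.IsComm.comm (F := F))
  rwa [pderiv_subst_pair (.X 1) (.X 0), pderiv_X_self, pderiv_X_of_ne (by decide), mul_one,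
    mul_zero, add_zero] at h

lemma pderiv_zero_subst_assoc (F : FormalGroup k) {a b c : MvPowerSeries σ k}
    (ha : PowerSeries.HasSubst a) (hb : PowerSeries.HasSubst b) (hc : PowerSeries.HasSubst c) :
    (pderiv k 0 F.toPowerSeries).subst ![F.toPowerSeries.subst ![a, b], c] *
        (pderiv k 0 F.toPowerSeries).subst ![a, b] =
      (pderiv k 0 F.toPowerSeries).subst ![a, F.toPowerSeries.subst ![b, c]] := by
  have hF (i j : Fin 3) : PowerSeries.HasSubst
      (F.toPowerSeries.subst ![(X i : MvPowerSeries (Fin 3) k), X j]) :=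
    hasSubst_subst_pair F (.X i) (.X j)
  have habc : HasSubst ![a, b, c] := hasSubst_of_constantCoeff_nilpotent fun i => by
    fin_cases i <;> assumption
  have h01 : pderiv k (0 : Fin 3) (F.toPowerSeries.subst ![X 0, X 1]) =
      (pderiv k 0 F.toPowerSeries).subst ![X 0, X 1] := by
    rw [pderiv_subst_pair (.X 0) (.X 1), pderiv_X_self, pderiv_X_of_ne (by decide), mul_one,
      mul_zero, add_zero]
  have h12 : pderiv k (0 : Fin 3) (F.toPowerSeries.subst ![X 1, X 2]) = 0 := by
    rw [pderiv_subst_pair (.X 1) (.X 2), pderiv_X_of_ne (by decide), pderiv_X_of_ne (by decide),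
      mul_zero, mul_zero, add_zero]
  have h := congrArg (pderiv k 0) F.assoc
  rw [pderiv_subst_pair (hF 0 1) (.X 2), pderiv_subst_pair (.X 0) (hF 1 2), h01, h12,
    pderiv_X_self, pderiv_X_of_ne (by decide), mul_zero, mul_zero, mul_one, add_zero,
    add_zero] at h
  simpa only [subst_mul habc, subst_pair_subst habc (hF 0 1) (.X 2),
    subst_pair_subst habc (.X 0) (hF 1 2), subst_pair_subst habc (.X _) (.X _), subst_X habc,
    Matrix.cons_val]
    using congrArg (subst ![a, b, c]) h

end FormalGroupLaw

section FormalInverse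

variable {σ : Type*} {F : FormalGroup k} {ι : PowerSeries k}

/-- `ι` is the formal inverse `[-1]x` of the formal group law `F`, i.e. `F(x, ι(x)) = 0`. -/
structure IsFormalInverse (F : FormalGroup k) (ι : PowerSeries k) : Prop where
  constantCoeff_eq_zero : PowerSeries.constantCoeff ι = 0
  subst_X_self : F.toPowerSeries.subst ![PowerSeries.X, ι] = 0

namespace IsFormalInverse

lemma hasSubst (hι : IsFormalInverse F ι) : PowerSeries.HasSubst ι :=
  .of_constantCoeff_zero' hι.constantCoeff_eq_zero

lemma hasSubst_subst (hι : IsFormalInverse F ι) {a : MvPowerSeries σ k}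
    (ha : PowerSeries.HasSubst a) : PowerSeries.HasSubst (ι.subst a) :=
  IsNilpotent_subst ha.const hι.hasSubst

protected lemma add_neg_cancel (hι : IsFormalInverse F ι) {a : MvPowerSeries σ k}
    (ha : PowerSeries.HasSubst a) : F.toPowerSeries.subst ![a, ι.subst a] = 0 := by
  have hzero : PowerSeries.subst a (0 : PowerSeries k) = 0 := by
    rw [← PowerSeries.coe_substAlgHom ha, map_zero]
  have h := congrArg (PowerSeries.subst a) hι.subst_X_self
  rwa [PowerSeries.subst, subst_pair_subst ha.const .X' hι.hasSubst, ← PowerSeries.subst,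
    ← PowerSeries.subst, PowerSeries.subst_X ha, hzero] at h

/-- The group of points of a commutative formal group law, with negation given by the formal
inverse; it turns identities between `F` and `ι` into identities of abelian groups. -/
abbrev addCommGroup [F.IsComm] (hι : IsFormalInverse F ι) : AddCommGroup (F.Point σ) :=
  let _ : Neg (F.Point σ) := ⟨fun a => ⟨ι.subst a.val, hι.hasSubst_subst a.prop⟩⟩
  { AddGroup.ofLeftAxioms add_assoc zero_add fun a : F.Point σ =>
      (add_comm _ _).trans (Subtype.ext (hι.add_neg_cancel a.prop)) with
    add_comm := add_comm }

protected lemma neg_sub [F.IsComm] (hι : IsFormalInverse F ι) {a b : MvPowerSeries σ k}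
    (ha : PowerSeries.HasSubst a) (hb : PowerSeries.HasSubst b) :
    ι.subst (F.toPowerSeries.subst ![a, ι.subst b]) = F.toPowerSeries.subst ![b, ι.subst a] := by
  let _ := hι.addCommGroup (σ := σ)
  let a' : F.Point σ := ⟨a, ha⟩
  let b' : F.Point σ := ⟨b, hb⟩
  exact congrArg Subtype.val (show -(a' + -b') = b' + -a' by abel)

protected lemma sub_add_cancel_right [F.IsComm] (hι : IsFormalInverse F ι) {a b : MvPowerSeries σ k}
    (ha : PowerSeries.HasSubst a) (hb : PowerSeries.HasSubst b) :
    F.toPowerSeries.subst ![b, ι.subst (F.toPowerSeries.subst ![a, b])] = ι.subst a := by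
  let _ := hι.addCommGroup (σ := σ)
  let a' : F.Point σ := ⟨a, ha⟩
  let b' : F.Point σ := ⟨b, hb⟩
  exact congrArg Subtype.val (show b' + -(a' + b') = -a' by abel)

lemma map {S : Type*} [CommRing S] (hι : IsFormalInverse F ι) (φ : k →+* S) :
    IsFormalInverse (F.map φ) (PowerSeries.map φ ι) where
  constantCoeff_eq_zero := by
    rw [← PowerSeries.coeff_zero_eq_constantCoeff_apply, PowerSeries.coeff_map,
      PowerSeries.coeff_zero_eq_constantCoeff_apply, hι.constantCoeff_eq_zero, map_zero]
  subst_X_self := by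
    have hX : MvPowerSeries.map φ PowerSeries.X = PowerSeries.X := PowerSeries.map_X φ
    have h := congrArg (MvPowerSeries.map φ) hι.subst_X_self
    rwa [map_subst_pair φ .X' hι.hasSubst, map_zero, hX] at h

end IsFormalInverse

end FormalInverse

section DifferenceQuotient

variable {σ : Type*} {F : FormalGroup k} {ι : PowerSeries k} {q : MvPowerSeries (Fin 2) k}

/-- `q(x, y)` is the quotient of the formal difference `F(x, ι(y))` by `x - y`. -/
def IsDifferenceQuotient (F : FormalGroup k) (ι : PowerSeries k)
    (q : MvPowerSeries (Fin 2) k) : Prop :=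
  F.toPowerSeries.subst ![X 0, ι.subst (X 1 : MvPowerSeries (Fin 2) k)] = (X 0 - X 1) * q

namespace IsDifferenceQuotient

lemma subst_pair (hι : IsFormalInverse F ι) (hq : IsDifferenceQuotient F ι q)
    {a b : MvPowerSeries σ k} (ha : PowerSeries.HasSubst a) (hb : PowerSeries.HasSubst b) :
    F.toPowerSeries.subst ![a, ι.subst b] = (a - b) * q.subst ![a, b] := by
  have hab := hasSubst_pair ha hb
  have h := congrArg (subst ![a, b]) hq
  rwa [subst_pair_subst hab (.X 0) (hι.hasSubst_subst (.X 1)),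
    subst_powerSeries_subst hab (.X 1), subst_mul hab, subst_sub hab, subst_X hab,
    subst_X hab] at h

lemma map {S : Type*} [CommRing S] (hι : IsFormalInverse F ι) (hq : IsDifferenceQuotient F ι q)
    (φ : k →+* S) :
    IsDifferenceQuotient (F.map φ) (PowerSeries.map φ ι) (MvPowerSeries.map φ q) := by
  have h := congrArg (MvPowerSeries.map φ) hq
  rwa [map_subst_pair φ (.X 0) (hι.hasSubst_subst (.X 1)), PowerSeries.map_subst (.X 1),
    map_mul, map_sub, map_X, map_X] at h

lemma eq_neg_X_of_subst_swap_eq_self (hι : IsFormalInverse F ι)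
    (hq : IsDifferenceQuotient F ι q) (hsymm : q.subst ![X 1, X 0] = q) :
    ι = -PowerSeries.X := by
  have hX : PowerSeries.HasSubst (PowerSeries.X : PowerSeries k) := .X'
  have h0 : PowerSeries.HasSubst (0 : PowerSeries k) := .zero'
  have hq0X : ι = -PowerSeries.X * q.subst ![0, (PowerSeries.X : PowerSeries k)] := by
    have h := hq.subst_pair hι h0 hX
    rwa [F.zero_add (hι.hasSubst_subst hX), PowerSeries.X_subst, zero_sub] at h
  have hqX0 : (PowerSeries.X : PowerSeries k) = PowerSeries.X * q.subst ![PowerSeries.X, 0] := by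
    have h := hq.subst_pair hι hX h0
    rwa [PowerSeries.subst_zero_of_constantCoeff_zero hι.constantCoeff_eq_zero, F.add_zero hX,
      sub_zero] at h
  have hswap : q.subst ![0, (PowerSeries.X : PowerSeries k)] = q.subst ![PowerSeries.X, 0] := by
    have h0X := hasSubst_pair h0 hX
    have h := congrArg (subst ![0, (PowerSeries.X : PowerSeries k)]) hsymm
    rw [subst_pair_subst h0X (.X 1) (.X 0), subst_X h0X, subst_X h0X] at h
    exact h.symm
  rw [hq0X, hswap, neg_mul, ← hqX0]

lemma subst_swap_eq_self_of_eq_neg_X [F.IsComm] (hι : IsFormalInverse F ι)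
    (hq : IsDifferenceQuotient F ι q) (hneg : ι = -PowerSeries.X) : q.subst ![X 1, X 0] = q := by
  have hX (i : Fin 2) : PowerSeries.HasSubst (X i : MvPowerSeries (Fin 2) k) := .X i
  have hanti : F.toPowerSeries.subst ![X 1, ι.subst (X 0 : MvPowerSeries (Fin 2) k)] =
      -F.toPowerSeries.subst ![X 0, ι.subst (X 1 : MvPowerSeries (Fin 2) k)] := by
    have hdiff := hasSubst_subst_pair F (hX 0) (hι.hasSubst_subst (hX 1))
    rw [← hι.neg_sub (hX 0) (hX 1), hneg, neg_subst (hneg ▸ hdiff),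
      PowerSeries.subst_X (hneg ▸ hdiff)]
  rw [hq.subst_pair hι (hX 1) (hX 0), hq] at hanti
  refine sub_eq_zero.1 ((X_sub_X_mul_eq_zero_iff (show (0 : Fin 2) ≠ 1 by decide)).1 ?_)
  linear_combination -hanti

lemma subst_swap_eq_self_iff [F.IsComm] (hι : IsFormalInverse F ι)
    (hq : IsDifferenceQuotient F ι q) :
    q.subst ![X 1, X 0] = q ↔ ι = -PowerSeries.X :=
  ⟨hq.eq_neg_X_of_subst_swap_eq_self hι, hq.subst_swap_eq_self_of_eq_neg_X hι⟩

end IsDifferenceQuotient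

end DifferenceQuotient

section InvariantDifferential

variable {σ : Type*} {F : FormalGroup k} {ι : PowerSeries k}

/-- The coefficient `ω(x) = ∂F/∂x (x, ι(x))` of the invariant differential `ω(x) dx` of the formal
group law `F` with formal inverse `ι`, normalised by `ω(0) = 1`. -/
def invariantDifferential (F : FormalGroup k) (ι : PowerSeries k) : PowerSeries k :=
  (pderiv k 0 F.toPowerSeries).subst ![PowerSeries.X, ι]

lemma invariantDifferential_subst (hι : IsFormalInverse F ι) {a : MvPowerSeries σ k}
    (ha : PowerSeries.HasSubst a) :
    (invariantDifferential F ι).subst a =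
      (pderiv k 0 F.toPowerSeries).subst ![a, ι.subst a] := by
  rw [invariantDifferential, PowerSeries.subst, subst_pair_subst ha.const .X' hι.hasSubst,
    ← PowerSeries.subst, ← PowerSeries.subst, PowerSeries.subst_X ha]

lemma constantCoeff_invariantDifferential (hι : IsFormalInverse F ι) :
    PowerSeries.constantCoeff (invariantDifferential F ι) = 1 := by
  have hzero : ∀ i, constantCoeff (![PowerSeries.X, ι] i) = 0 :=
    Fin.forall_fin_two.2 ⟨PowerSeries.constantCoeff_X, hι.constantCoeff_eq_zero⟩
  exact (constantCoeff_subst_of_constantCoeff_eq_zero hzero _).trans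
    ((constantCoeff_pderiv 0 _).trans F.lin_coeff_X)

lemma invariantDifferential_subst_add_mul [F.IsComm] (hι : IsFormalInverse F ι)
    {a b : MvPowerSeries σ k} (ha : PowerSeries.HasSubst a) (hb : PowerSeries.HasSubst b) :
    (invariantDifferential F ι).subst (F.toPowerSeries.subst ![a, b]) *
        (pderiv k 0 F.toPowerSeries).subst ![a, b] =
      (invariantDifferential F ι).subst a := by
  have hab := hasSubst_subst_pair F ha hb
  rw [invariantDifferential_subst hι hab, invariantDifferential_subst hι ha,
    pderiv_zero_subst_assoc F ha hb (hι.hasSubst_subst hab), hι.sub_add_cancel_right ha hb]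

lemma IsDifferenceQuotient.subst_X_X_eq_invariantDifferential
    {q : MvPowerSeries (Fin 2) k} (hι : IsFormalInverse F ι) (hq : IsDifferenceQuotient F ι q) :
    q.subst ![PowerSeries.X, PowerSeries.X] = invariantDifferential F ι := by
  have hXX : HasSubst ![(PowerSeries.X : PowerSeries k), PowerSeries.X] := hasSubst_pair .X' .X'
  have hderiv : (pderiv k 0 F.toPowerSeries).subst
      ![X 0, ι.subst (X 1 : MvPowerSeries (Fin 2) k)] = (X 0 - X 1) * pderiv k 0 q + q := by
    have h := congrArg (pderiv k 0) hq
    rw [pderiv_subst_pair (.X 0) (hι.hasSubst_subst (.X 1)), pderiv_powerSeries_subst (.X 1),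
      Derivation.leibniz, map_sub, pderiv_X_self, pderiv_X_of_ne (by decide)] at h
    linear_combination (exp := 1) h
  have hdiag := congrArg (subst ![(PowerSeries.X : PowerSeries k), PowerSeries.X]) hderiv
  rw [subst_pair_subst hXX (.X 0) (hι.hasSubst_subst (.X 1)), MvPowerSeries.subst_add hXX,
    subst_mul hXX, subst_sub hXX, subst_powerSeries_subst hXX (.X 1), subst_X hXX,
    subst_X hXX] at hdiag
  simpa [invariantDifferential] using hdiag.symm

end InvariantDifferential

section Logarithm

variable {σ : Type*} {F : FormalGroup k} {ι L : PowerSeries k}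

/-- `L` is a logarithm of the formal group law `F`: a strict isomorphism from `F` to the additive
formal group law. -/
structure IsLogarithm (F : FormalGroup k) (L : PowerSeries k) : Prop where
  constantCoeff_eq_zero : PowerSeries.constantCoeff L = 0
  coeff_one_eq_one : PowerSeries.coeff 1 L = 1
  subst_eq_add : L.subst F.toPowerSeries = L.subst (X 0 : MvPowerSeries (Fin 2) k) + L.subst (X 1)

lemma X_sq_dvd_sub_X_iff :
    (PowerSeries.X : PowerSeries k) ^ 2 ∣ L - PowerSeries.X ↔
      PowerSeries.constantCoeff L = 0 ∧ PowerSeries.coeff 1 L = 1 := by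
  simp [PowerSeries.X_pow_dvd_iff, sub_eq_zero, Nat.le_one_iff_eq_zero_or_eq_one]

namespace IsLogarithm

lemma subst_add (hL : IsLogarithm F L) {a b : MvPowerSeries σ k}
    (ha : PowerSeries.HasSubst a) (hb : PowerSeries.HasSubst b) :
    L.subst (F.toPowerSeries.subst ![a, b]) = L.subst a + L.subst b := by
  have hab := hasSubst_pair ha hb
  have h := congrArg (subst ![a, b]) hL.subst_eq_add
  rwa [subst_powerSeries_subst hab (.of_constantCoeff_zero F.zero_constantCoeff),
    MvPowerSeries.subst_add hab, subst_powerSeries_subst hab (.X 0),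
    subst_powerSeries_subst hab (.X 1), subst_X hab, subst_X hab] at h

lemma subst_formalInverse (hL : IsLogarithm F L) (hι : IsFormalInverse F ι) :
    L.subst ι = -L := by
  have h := hL.subst_add .X' hι.hasSubst
  rw [hι.subst_X_self, PowerSeries.subst_zero_of_constantCoeff_zero hL.constantCoeff_eq_zero,
    PowerSeries.X_subst] at h
  exact (neg_eq_of_add_eq_zero_right h.symm).symm

lemma subst_injective (hL : IsLogarithm F L) {a b : MvPowerSeries σ k}
    (ha : PowerSeries.HasSubst a) (hb : PowerSeries.HasSubst b) (h : L.subst a = L.subst b) :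
    a = b := by
  have hunit : IsUnit (PowerSeries.coeff 1 L) := hL.coeff_one_eq_one ▸ isUnit_one
  have hleft {c : MvPowerSeries σ k} (hc : PowerSeries.HasSubst c) :
      (L.substInvOfIsUnit hunit).subst (L.subst c) = c := by
    rw [← PowerSeries.subst_comp_subst_apply (.of_constantCoeff_zero' hL.constantCoeff_eq_zero) hc,
      PowerSeries.subst_substInvOfIsUnit_left _ hL.constantCoeff_eq_zero, PowerSeries.subst_X hc]
  rw [← hleft ha, h, hleft hb]

lemma subst_neg_X_eq_neg_iff (hL : IsLogarithm F L) (hι : IsFormalInverse F ι) :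
    L.subst (-PowerSeries.X : PowerSeries k) = -L ↔ ι = -PowerSeries.X := by
  have hX : PowerSeries.HasSubst (-PowerSeries.X : PowerSeries k) :=
    .of_constantCoeff_zero' (by simp)
  rw [← hL.subst_formalInverse hι]
  exact ⟨fun h => (hL.subst_injective hX hι.hasSubst h).symm, fun h => by rw [h]⟩

end IsLogarithm

lemma exists_isLogarithm [Algebra ℚ k] [F.IsComm] (hι : IsFormalInverse F ι) :
    ∃ L, IsLogarithm F L ∧ PowerSeries.derivative k L = invariantDifferential F ι := by
  have _ : IsAddTorsionFree k := .of_module_rat k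
  obtain ⟨L, hL0, hL⟩ := exists_derivative_eq (invariantDifferential F ι)
  have hF : PowerSeries.HasSubst F.toPowerSeries := .of_constantCoeff_zero F.zero_constantCoeff
  have hX (i : Fin 2) : PowerSeries.HasSubst (X i : MvPowerSeries (Fin 2) k) := .X i
  have hL1 : PowerSeries.coeff 1 L = 1 := by
    have h := PowerSeries.coeff_derivative L 0
    rw [hL, PowerSeries.coeff_zero_eq_constantCoeff_apply,
      constantCoeff_invariantDifferential hι] at h
    simpa using h.symm
  refine ⟨L, ⟨hL0, hL1, pderiv.ext (Fin.forall_fin_two.2 ⟨?_, ?_⟩) ?_⟩, hL⟩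
  · have h := invariantDifferential_subst_add_mul hι (hX 0) (hX 1)
    rw [subst_X_zero_X_one, subst_X_zero_X_one] at h
    rw [map_add, pderiv_powerSeries_subst hF, pderiv_powerSeries_subst (hX 0),
      pderiv_powerSeries_subst (hX 1), pderiv_X_self, pderiv_X_of_ne (by decide), mul_one,
      mul_zero, add_zero, hL, h]
  · have h := invariantDifferential_subst_add_mul hι (hX 1) (hX 0)
    rw [← FormalGroup.IsComm.comm, ← pderiv_one_eq_pderiv_zero_subst] at h
    rw [map_add, pderiv_powerSeries_subst hF, pderiv_powerSeries_subst (hX 0),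
      pderiv_powerSeries_subst (hX 1), pderiv_X_self, pderiv_X_of_ne (by decide), mul_one,
      mul_zero, zero_add, hL, h]
  · rw [map_add, PowerSeries.constantCoeff_subst_eq_zero F.zero_constantCoeff _ hL0,
      PowerSeries.constantCoeff_subst_eq_zero (constantCoeff_X _) _ hL0,
      PowerSeries.constantCoeff_subst_eq_zero (constantCoeff_X _) _ hL0, add_zero]

end Logarithm

section Parity

variable {f : PowerSeries k}

lemma subst_neg_X_eq_neg_iff_coeff_even [IsAddTorsionFree k] :
    f.subst (-PowerSeries.X : PowerSeries k) = -f ↔ ∀ n, Even n → PowerSeries.coeff n f = 0 := by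
  have hcoeff (n : ℕ) : PowerSeries.coeff n (f.subst (-PowerSeries.X : PowerSeries k)) =
      (-1) ^ n * PowerSeries.coeff n f := by
    rw [← neg_one_smul k (PowerSeries.X : PowerSeries k), ← PowerSeries.rescale_eq_subst,
      PowerSeries.coeff_rescale]
  rw [PowerSeries.ext_iff]
  refine forall_congr' fun n => ?_
  rw [hcoeff, map_neg]
  rcases n.even_or_odd with hn | hn
  · simp [hn, self_eq_neg]
  · simp [hn]

lemma coeff_even_eq_zero_iff_derivative [IsAddTorsionFree k]
    (hf : PowerSeries.constantCoeff f = 0) :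
    (∀ n, Even n → PowerSeries.coeff n f = 0) ↔
      ∀ n, Odd n → PowerSeries.coeff n (PowerSeries.derivative k f) = 0 := by
  have hderiv (n : ℕ) : PowerSeries.coeff n (PowerSeries.derivative k f) = 0 ↔
      PowerSeries.coeff (n + 1) f = 0 := by
    rw [PowerSeries.coeff_derivative, ← Nat.cast_succ, mul_comm, ← nsmul_eq_mul,
      smul_eq_zero_iff_right n.succ_ne_zero]
  simp_rw [hderiv]
  refine ⟨fun h n hn => h _ hn.add_one, fun h n hn => ?_⟩
  cases n with
  | zero => rwa [PowerSeries.coeff_zero_eq_constantCoeff_apply]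
  | succ n => exact h n (by grind)

end Parity

section BaseChange

variable {K : Type*} [CommRing K] {φ : k →+* K}

lemma mvPowerSeries_map_injective {σ : Type*} (hφ : Function.Injective φ) :
    Function.Injective (MvPowerSeries.map (σ := σ) φ) := fun f g h => by
  ext d
  exact hφ (by rw [← coeff_map, h, coeff_map])

lemma map_subst_swap_eq_self_iff (hφ : Function.Injective φ) {q : MvPowerSeries (Fin 2) k} :
    (q.map φ).subst ![X 1, X 0] = q.map φ ↔ q.subst ![X 1, X 0] = q := by
  have h := map_subst_pair φ (.X (1 : Fin 2)) (.X 0) q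
  rw [map_X, map_X] at h
  rw [← h, (mvPowerSeries_map_injective hφ).eq_iff]

lemma coeff_map_subst_X_X_eq_zero_iff (hφ : Function.Injective φ) {q : MvPowerSeries (Fin 2) k}
    {n : ℕ} :
    PowerSeries.coeff n ((q.map φ).subst ![(PowerSeries.X : PowerSeries K), PowerSeries.X]) = 0 ↔
      PowerSeries.coeff n (q.subst ![(PowerSeries.X : PowerSeries k), PowerSeries.X]) = 0 := by
  have hX : MvPowerSeries.map φ PowerSeries.X = PowerSeries.X := PowerSeries.map_X φ
  have h := map_subst_pair φ .X' .X' q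
  rw [hX] at h
  rw [← h]
  exact map_eq_zero_iff φ hφ

end BaseChange

namespace IsDifferenceQuotient

variable {F : FormalGroup k} {ι L : PowerSeries k} {q : MvPowerSeries (Fin 2) k}

lemma subst_swap_eq_self_iff_isLogarithm_odd [F.IsComm] (hι : IsFormalInverse F ι)
    (hq : IsDifferenceQuotient F ι q) (hL : IsLogarithm F L) :
    q.subst ![X 1, X 0] = q ↔ L.subst (-PowerSeries.X : PowerSeries k) = -L :=
  (hq.subst_swap_eq_self_iff hι).trans (hL.subst_neg_X_eq_neg_iff hι).symm

variable {K : Type*} [CommRing K] [Algebra ℚ K] {φ : k →+* K}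

theorem subst_swap_eq_self_iff_coeff_odd_subst_X_X [F.IsComm] (hφ : Function.Injective φ)
    (hι : IsFormalInverse F ι) (hq : IsDifferenceQuotient F ι q) :
    q.subst ![X 1, X 0] = q ↔ ∀ n, Odd n →
      PowerSeries.coeff n (q.subst ![(PowerSeries.X : PowerSeries k), PowerSeries.X]) = 0 := by
  have _ : IsAddTorsionFree K := .of_module_rat K
  obtain ⟨L, hL, hderiv⟩ := exists_isLogarithm (hι.map φ)
  have hqK := hq.map hι φ
  simp_rw [← map_subst_swap_eq_self_iff hφ, ← coeff_map_subst_X_X_eq_zero_iff hφ]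
  rw [hqK.subst_swap_eq_self_iff_isLogarithm_odd (hι.map φ) hL,
    subst_neg_X_eq_neg_iff_coeff_even,
    coeff_even_eq_zero_iff_derivative hL.constantCoeff_eq_zero, hderiv,
    hqK.subst_X_X_eq_invariantDifferential (hι.map φ)]

theorem subst_swap_eq_self_iff_forall_isLogarithm_odd [F.IsComm] (hφ : Function.Injective φ)
    (hι : IsFormalInverse F ι) (hq : IsDifferenceQuotient F ι q) :
    q.subst ![X 1, X 0] = q ↔ ∀ L, IsLogarithm (F.map φ) L →
      L.subst (-PowerSeries.X : PowerSeries K) = -L := by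
  obtain ⟨L, hL, -⟩ := exists_isLogarithm (hι.map φ)
  have hodd {M : PowerSeries K} (hM : IsLogarithm (F.map φ) M) :=
    (hq.map hι φ).subst_swap_eq_self_iff_isLogarithm_odd (hι.map φ) hM
  rw [← map_subst_swap_eq_self_iff hφ]
  exact ⟨fun h M hM => (hodd hM).1 h, fun h => (hodd hL).2 (h L hL)⟩

end IsDifferenceQuotient

section CoefficientSubstitution

lemma psSubst_const_eq_subst {τ : Type*} {a : MvPowerSeries τ k} (ha : constantCoeff a = 0)
    (f : PowerSeries k) : psSubst (fun _ : Unit => a) f = f.subst a :=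
  psSubst_eq_subst (fun _ => ha) f

lemma psSubst_pair_eq_subst {τ : Type*} {a b : MvPowerSeries τ k} (ha : constantCoeff a = 0)
    (hb : constantCoeff b = 0) (F : MvPowerSeries (Fin 2) k) :
    psSubst ![a, b] F = F.subst ![a, b] :=
  psSubst_eq_subst (Fin.forall_fin_two.2 ⟨ha, hb⟩) F

lemma formalDiff_eq_subst {ι : PowerSeries k} (hι : PowerSeries.constantCoeff ι = 0)
    (F : MvPowerSeries (Fin 2) k) :
    formalDiff F ι = F.subst ![X 0, ι.subst (X 1 : MvPowerSeries (Fin 2) k)] := by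
  have hX : constantCoeff (X 1 : MvPowerSeries (Fin 2) k) = 0 := constantCoeff_X 1
  rw [formalDiff, psSubst_const_eq_subst hX, psSubst_pair_eq_subst (constantCoeff_X 0)
    (PowerSeries.constantCoeff_subst_eq_zero hX _ hι)]

lemma isLogarithm_iff_psSubst (F : FormalGroup k) {L : PowerSeries k} :
    IsLogarithm F L ↔ (PowerSeries.X : PowerSeries k) ^ 2 ∣ L - PowerSeries.X ∧
      psSubst (fun _ : Unit => F.toPowerSeries) L =
        psSubst (fun _ : Unit => (X 0 : MvPowerSeries (Fin 2) k)) L +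
          psSubst (fun _ : Unit => (X 1 : MvPowerSeries (Fin 2) k)) L := by
  rw [psSubst_const_eq_subst F.zero_constantCoeff, psSubst_const_eq_subst (constantCoeff_X 0),
    psSubst_const_eq_subst (constantCoeff_X 1), X_sq_dvd_sub_X_iff]
  exact ⟨fun h => ⟨⟨h.1, h.2⟩, h.3⟩, fun h => ⟨h.1.1, h.1.2, h.2⟩⟩

end CoefficientSubstitution

open TensorProduct in
theorem stmt4 {A : Type*} [CommRing A] [NoZeroSMulDivisors ℤ A]
    (F : MvPowerSeries (Fin 2) A) (hF : IsFormalGroupLaw F)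
    (ι : PowerSeries A) (hι0 : PowerSeries.constantCoeff ι = 0)
    (hι : psSubst ![PowerSeries.X, ι] F = 0)
    (q : MvPowerSeries (Fin 2) A)
    (hq : formalDiff F ι = ((X 0 : MvPowerSeries (Fin 2) A) - X 1) * q) :
    -- (i) ↔ (ii)
    ((swapPS q = q) ↔
      (∀ n : ℕ, Odd n →
        PowerSeries.coeff n (psSubst ![(PowerSeries.X : PowerSeries A), PowerSeries.X] q) = 0)) ∧
    -- (i) ↔ (iii)
    ((swapPS q = q) ↔
      (∀ L : PowerSeries (ℚ ⊗[ℤ] A),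
        (PowerSeries.X : PowerSeries (ℚ ⊗[ℤ] A)) ^ 2 ∣ L - PowerSeries.X →
        psSubst (fun _ : Unit =>
            MvPowerSeries.map
              (Algebra.TensorProduct.includeRight : A →ₐ[ℤ] ℚ ⊗[ℤ] A).toRingHom F) L =
          psSubst (fun _ : Unit => (X 0 : MvPowerSeries (Fin 2) (ℚ ⊗[ℤ] A))) L +
          psSubst (fun _ : Unit => (X 1 : MvPowerSeries (Fin 2) (ℚ ⊗[ℤ] A))) L →
        psSubst (fun _ : Unit => -(PowerSeries.X : PowerSeries (ℚ ⊗[ℤ] A))) L = -L)) := by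
  have hφ : Function.Injective
      (Algebra.TensorProduct.includeRight : A →ₐ[ℤ] ℚ ⊗[ℤ] A).toRingHom :=
    Algebra.TensorProduct.includeRight_injective (algebraMap ℤ ℚ).injective_int
  have hX : constantCoeff (PowerSeries.X : PowerSeries A) = 0 := PowerSeries.constantCoeff_X
  have hnegX : constantCoeff (-PowerSeries.X : PowerSeries (ℚ ⊗[ℤ] A)) = 0 := by
    rw [map_neg, neg_eq_zero]
    exact PowerSeries.constantCoeff_X
  have hinv : IsFormalInverse hF.toFormalGroup ι :=
    ⟨hι0, (psSubst_pair_eq_subst hX hι0 F).symm.trans hι⟩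
  have hquot : IsDifferenceQuotient hF.toFormalGroup ι q :=
    (formalDiff_eq_subst hι0 F).symm.trans hq
  rw [swapPS_eq_subst, psSubst_pair_eq_subst hX hX]
  refine ⟨hquot.subst_swap_eq_self_iff_coeff_odd_subst_X_X hφ hinv,
    (hquot.subst_swap_eq_self_iff_forall_isLogarithm_odd hφ hinv).trans ?_⟩
  simp_rw [isLogarithm_iff_psSubst, and_imp, psSubst_const_eq_subst hnegX]
  rfl
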